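/- The variable v acts as zero on the tensor product Y ⊗_R Y: for all x ∈ Y ⊗_R Y, v·x = 0. -/

import Mathlib

/-!
It suffices to kill `v • (b_i ⊗ b_j)`, since the `b_j` generate `Y`. The relations give
`v b_i ⊗ b_j = p b_{i+1} ⊗ b_j = b_{i+1} ⊗ p b_j`. For `j = 0` this vanishes because `p b_0 = 0`;
for `j > 0` it equals `v • (b_{i+1} ⊗ b_{j-1})`. Hence induction on `j`, for all `i` at once,
proves the claim (`X_smul_bY_tmul_bY`).
-/

noncomputable section

/-- `R = ℤ_p[v]`, the polynomial ring over the `p`-adic integers. -/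
abbrev R (p : ℕ) [Fact p.Prime] : Type := Polynomial (PadicInt p)

/-- `F = ⊕_{j ∈ ℕ} R·b_j`, the free `R`-module on generators `b_j = single j 1`. -/
abbrev F (p : ℕ) [Fact p.Prime] : Type := ℕ →₀ R p

/-- The relations `p·b_0` and `p·b_j - v·b_{j-1}` for `j ≥ 1`. -/
def rel (p : ℕ) [Fact p.Prime] : ℕ → F p
  | 0 => Finsupp.single 0 (p : R p)
  | (j + 1) => Finsupp.single (j + 1) (p : R p) - Finsupp.single j (Polynomial.X : R p)

/-- `Y`, the quotient of `F` by the submodule generated by the relations. -/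
abbrev Y (p : ℕ) [Fact p.Prime] : Type :=
  F p ⧸ Submodule.span (R p) (Set.range (rel p))

/-- The image of the generator `b_j` in `Y`. -/
def bY (p : ℕ) [Fact p.Prime] (j : ℕ) : Y p :=
  Submodule.Quotient.mk (Finsupp.single j (1 : R p))

open TensorProduct

lemma p_smul_bY_zero (p : ℕ) [Fact p.Prime] : (p : R p) • bY p 0 = 0 := by
  rw [bY, ← Submodule.Quotient.mk_smul, Submodule.Quotient.mk_eq_zero]
  refine Submodule.subset_span ⟨0, ?_⟩
  simp [rel]

lemma p_smul_bY_succ (p : ℕ) [Fact p.Prime] (j : ℕ) :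
    (p : R p) • bY p (j + 1) = (Polynomial.X : R p) • bY p j := by
  rw [bY, bY, ← Submodule.Quotient.mk_smul, ← Submodule.Quotient.mk_smul, Submodule.Quotient.eq]
  refine Submodule.subset_span ⟨j + 1, ?_⟩
  simp [rel]

lemma span_bY (p : ℕ) [Fact p.Prime] : Submodule.span (R p) (Set.range (bY p)) = ⊤ := by
  rw [eq_top_iff]
  rintro y -
  obtain ⟨f, rfl⟩ := Submodule.Quotient.mk_surjective _ y
  induction f using Finsupp.induction_linear with
  | zero => exact Submodule.zero_mem _
  | add f g hf hg => exact Submodule.add_mem _ hf hg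
  | single j a =>
    have h : (Submodule.Quotient.mk (Finsupp.single j a) : Y p) = a • bY p j := by
      rw [bY, ← Submodule.Quotient.mk_smul, Finsupp.smul_single, smul_eq_mul, mul_one]
    rw [h]
    exact Submodule.smul_mem _ _ (Submodule.subset_span ⟨j, rfl⟩)

lemma X_smul_bY_tmul_bY (p : ℕ) [Fact p.Prime] (i j : ℕ) :
    (Polynomial.X : R p) • (bY p i ⊗ₜ[R p] bY p j) = 0 := by
  induction j generalizing i with
  | zero =>
    rw [TensorProduct.smul_tmul', ← p_smul_bY_succ, TensorProduct.smul_tmul, p_smul_bY_zero,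
      TensorProduct.tmul_zero]
  | succ j ih =>
    rw [TensorProduct.smul_tmul', ← p_smul_bY_succ, TensorProduct.smul_tmul, p_smul_bY_succ,
      TensorProduct.tmul_smul, ih]

/-- the variable `v` acts as zero on `Y ⊗_R Y`. -/
theorem stmt_5 (p : ℕ) [Fact p.Prime] :
    ∀ x : Y p ⊗[R p] Y p, (Polynomial.X : R p) • x = 0 := by
  intro x
  induction x using TensorProduct.induction_on with
  | zero => exact smul_zero _
  | add x y hx hy => rw [smul_add, hx, hy, add_zero]
  | tmul x y =>
    have hx : x ∈ Submodule.span (R p) (Set.range (bY p)) := by rw [span_bY]; trivial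
    have hy : y ∈ Submodule.span (R p) (Set.range (bY p)) := by rw [span_bY]; trivial
    induction hx, hy using Submodule.span_induction₂ with
    | mem_mem x y hx hy =>
      obtain ⟨i, rfl⟩ := hx
      obtain ⟨j, rfl⟩ := hy
      exact X_smul_bY_tmul_bY p i j
    | zero_left => rw [TensorProduct.zero_tmul, smul_zero]
    | zero_right => rw [TensorProduct.tmul_zero, smul_zero]
    | add_left x y z _ _ _ hx hy => rw [TensorProduct.add_tmul, smul_add, hx, hy, add_zero]
    | add_right x y z _ _ _ hx hy => rw [TensorProduct.tmul_add, smul_add, hx, hy, add_zero]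
    | smul_left r x y _ _ h => rw [← TensorProduct.smul_tmul', smul_comm, h, smul_zero]
    | smul_right r x y _ _ h => rw [TensorProduct.tmul_smul, smul_comm, h, smul_zero]
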